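/- Let f : {0,1}^m → {0,1} be a non-constant monotone function with L(mKW_f) ≥ 4m², let S ⊆ {0,1}^ℓ × 𝒪 be a search problem, gd : Λ×Λ → {0,1} a gadget with Λ = {0,1}^t, and let Π be any protocol that solves mKW_f ⊛ (S◇gd). Then Π has either a live transcript of length exactly ⌊log₂ L(mKW_f) − 2·log₂ m − 2⌋, or a live transcript that is a leaf. -/

import Mathlib

open Classical

noncomputable section

/-! ### Deterministic communication protocols -/

/-- A deterministic communication protocol: a finite binary protocol tree whose
leaves are labeled by outputs in `O`.  At a `nodeA` vertex Alice sends a bit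
(computed from her input), at a `nodeB` vertex Bob sends a bit. -/
inductive Protocol (X Y O : Type) : Type where
  | leaf : O → Protocol X Y O
  | nodeA : (X → Bool) → Protocol X Y O → Protocol X Y O → Protocol X Y O
  | nodeB : (Y → Bool) → Protocol X Y O → Protocol X Y O → Protocol X Y O

namespace Protocol

variable {X Y O : Type}

/-- The output of the protocol on an input pair. -/
def run : Protocol X Y O → X → Y → O
  | leaf o, _, _ => o
  | nodeA h p0 p1, x, y => if h x then run p1 x y else run p0 x y
  | nodeB h p0 p1, x, y => if h y then run p1 x y else run p0 x y

/-- Depth (communication complexity) of a protocol tree. -/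
def depth : Protocol X Y O → ℕ
  | leaf _ => 0
  | nodeA _ p0 p1 => max (depth p0) (depth p1) + 1
  | nodeB _ p0 p1 => max (depth p0) (depth p1) + 1

/-- Number of leaves (protocol size). -/
def leaves : Protocol X Y O → ℕ
  | leaf _ => 1
  | nodeA _ p0 p1 => leaves p0 + leaves p1
  | nodeB _ p0 p1 => leaves p0 + leaves p1

/-- `followsA p π x` : Alice's input `x` is consistent with the partial transcript `π`,
i.e. `x` belongs to the Alice-side `𝒳_π` of the rectangle associated with the vertex `π`. -/
def followsA : Protocol X Y O → List Bool → X → Prop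
  | _, [], _ => True
  | leaf _, _ :: _, _ => False
  | nodeA h p0 p1, b :: rest, x =>
      h x = b ∧ (if b then followsA p1 rest x else followsA p0 rest x)
  | nodeB _ p0 p1, b :: rest, x =>
      if b then followsA p1 rest x else followsA p0 rest x

/-- `followsB p π y` : Bob's input `y` is consistent with the partial transcript `π`,
i.e. `y` belongs to the Bob-side `𝒴_π` of the rectangle associated with the vertex `π`. -/
def followsB : Protocol X Y O → List Bool → Y → Prop
  | _, [], _ => True
  | leaf _, _ :: _, _ => False
  | nodeA _ p0 p1, b :: rest, y =>
      if b then followsB p1 rest y else followsB p0 rest y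
  | nodeB h p0 p1, b :: rest, y =>
      h y = b ∧ (if b then followsB p1 rest y else followsB p0 rest y)

/-- The subtree of the protocol reached by following a partial transcript. -/
def subtree : Protocol X Y O → List Bool → Option (Protocol X Y O)
  | p, [] => some p
  | leaf _, _ :: _ => none
  | nodeA _ p0 p1, b :: rest => if b then subtree p1 rest else subtree p0 rest
  | nodeB _ p0 p1, b :: rest => if b then subtree p1 rest else subtree p0 rest

/-- `π` is a (partial or full) transcript of the protocol, i.e. a vertex of the protocol tree. -/
def IsTranscript (p : Protocol X Y O) (π : List Bool) : Prop :=
  (subtree p π).isSome = true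

/-- `π` is a full transcript of the protocol, i.e. a root-to-leaf path. -/
def IsFullTranscript (p : Protocol X Y O) (π : List Bool) : Prop :=
  ∃ o : O, subtree p π = some (leaf o)

end Protocol

/-- A protocol solves a communication problem `S` if on every input pair it
outputs a valid output. -/
def Solves {X Y O : Type} (p : Protocol X Y O) (S : X → Y → O → Prop) : Prop :=
  ∀ x y, S x y (p.run x y)

/-- `L(S)`: minimal number of leaves of a protocol solving `S`. -/
def Lsize {X Y O : Type} (S : X → Y → O → Prop) : ℕ :=
  sInf {k | ∃ p : Protocol X Y O, Solves p S ∧ p.leaves = k}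

/-- `CC(S)`: the deterministic communication complexity (minimal depth) of `S`. -/
def CC {X Y O : Type} (S : X → Y → O → Prop) : ℕ :=
  sInf {k | ∃ p : Protocol X Y O, Solves p S ∧ p.depth = k}

/-! ### Decision trees and query complexity -/

inductive DTree (ι O : Type) : Type where
  | leaf : O → DTree ι O
  | node : ι → DTree ι O → DTree ι O → DTree ι O

namespace DTree

variable {ι O : Type}

def run : DTree ι O → (ι → Bool) → O
  | leaf o, _ => o
  | node i t0 t1, z => if z i then run t1 z else run t0 z

def depth : DTree ι O → ℕ
  | leaf _ => 0
  | node _ t0 t1 => max (depth t0) (depth t1) + 1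

end DTree

def DSolves {ι O : Type} (T : DTree ι O) (S : (ι → Bool) → O → Prop) : Prop :=
  ∀ z, S z (T.run z)

/-- `Q(S)`: the deterministic query complexity of the search problem `S`. -/
def Qcomplexity {ι O : Type} (S : (ι → Bool) → O → Prop) : ℕ :=
  sInf {k | ∃ T : DTree ι O, DSolves T S ∧ T.depth = k}

/-! ### Monotone Karchmer–Wigderson relations -/

/-- The monotone KW relation of a rectangle `A × B`: find `i` with `x i > y i`. -/
def mKWrect {ι : Type} (A B : Set (ι → Bool)) : ↥A → ↥B → ι → Prop :=
  fun x y i => x.val i = true ∧ y.val i = false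

/-- `mL(A × B)`: the monotone formula complexity of the rectangle `A × B`. -/
def mL {ι : Type} (A B : Set (ι → Bool)) : ℕ := Lsize (mKWrect A B)

/-- The monotone KW relation of a monotone function `f`. -/
def mKW {ι : Type} (f : (ι → Bool) → Bool) :
    {x : ι → Bool // f x = true} → {y : ι → Bool // f y = false} → ι → Prop :=
  fun x y i => x.val i = true ∧ y.val i = false

/-! ### Lifted search problems, discrepancy, reductions -/

/-- The lifted search problem `S ◇ gd`. -/
def liftSP {ι Λ O : Type} (S : (ι → Bool) → O → Prop) (gd : Λ → Λ → Bool) :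
    (ι → Λ) → (ι → Λ) → O → Prop :=
  fun x y o => S (fun i => gd (x i) (y i)) o

/-- The discrepancy of a gadget `gd : {0,1}^t × {0,1}^t → {0,1}`. -/
def disc {t : ℕ} (gd : (Fin t → Bool) → (Fin t → Bool) → Bool) : ℝ :=
  sSup {r : ℝ | ∃ A B : Finset (Fin t → Bool),
    r = |((((A ×ˢ B).filter fun uv => gd uv.1 uv.2 = false).card : ℝ) -
          (((A ×ˢ B).filter fun uv => gd uv.1 uv.2 = true).card : ℝ))| /
        ((2 ^ t : ℝ) * (2 ^ t : ℝ))}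

/-- A (rectangular) reduction between communication problems. -/
def Reduces {X Y O X' Y' O' : Type}
    (S : X → Y → O → Prop) (S' : X' → Y' → O' → Prop) : Prop :=
  ∃ (RA : X → X') (RB : Y → Y') (Rout : O' → O),
    ∀ x y o', S' (RA x) (RB y) o' → S x y (Rout o')

/-- An injective reduction between communication problems. -/
def ReducesInj {X Y O X' Y' O' : Type}
    (S : X → Y → O → Prop) (S' : X' → Y' → O' → Prop) : Prop :=
  ∃ (RA : X → X') (RB : Y → Y') (Rout : O' → O),
    Function.Injective RA ∧ Function.Injective RB ∧
    ∀ x y o', S' (RA x) (RB y) o' → S x y (Rout o')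

/-! ### Compositions -/

/-- `mKW_f ◇ mKW_g := mKW_{f ◇ g}` : Alice gets `X ∈ (f◇g)⁻¹(1)`, Bob gets
`Y ∈ (f◇g)⁻¹(0)`, and they must find an entry `(i,j)` with `X i j > Y i j`. -/
def diamondKW {m : ℕ} {ι : Type} (f : (Fin m → Bool) → Bool) (g : (ι → Bool) → Bool) :
    {X : Fin m → ι → Bool // f (fun i => g (X i)) = true} →
    {Y : Fin m → ι → Bool // f (fun i => g (Y i)) = false} →
    (Fin m × ι) → Prop :=
  fun X Y e => X.val e.1 e.2 = true ∧ Y.val e.1 e.2 = false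

/-- `mKW_f ⊛ mKW_g` : same inputs as `mKW_f ◇ mKW_g`, but valid outputs are entries
`(i,j)` with `a_i > b_i` and `X i j > Y i j`, where `a_i = g(X_i)`, `b_i = g(Y_i)`. -/
def starKW {m : ℕ} {ι : Type} (f : (Fin m → Bool) → Bool) (g : (ι → Bool) → Bool) :
    {X : Fin m → ι → Bool // f (fun i => g (X i)) = true} →
    {Y : Fin m → ι → Bool // f (fun i => g (Y i)) = false} →
    (Fin m × ι) → Prop :=
  fun X Y e => g (X.val e.1) = true ∧ g (Y.val e.1) = false ∧
    X.val e.1 e.2 = true ∧ Y.val e.1 e.2 = false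

/-- `mKW_f ⊛ (S ◇ gd)` : Alice gets `X ∈ Λ^{m×ℓ}` and `a ∈ f⁻¹(1)`, Bob gets
`Y ∈ Λ^{m×ℓ}` and `b ∈ f⁻¹(0)`; valid outputs are pairs `(i,o)` with `a_i > b_i`
and `o` a valid output of `S ◇ gd` on the rows `(X_i, Y_i)`. -/
def starLift {m ℓ : ℕ} {Λ O : Type} (f : (Fin m → Bool) → Bool)
    (S : (Fin ℓ → Bool) → O → Prop) (gd : Λ → Λ → Bool) :
    ((Fin m → Fin ℓ → Λ) × {a : Fin m → Bool // f a = true}) →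
    ((Fin m → Fin ℓ → Λ) × {b : Fin m → Bool // f b = false}) →
    (Fin m × O) → Prop :=
  fun Xa Yb io =>
    Xa.2.val io.1 = true ∧ Yb.2.val io.1 = false ∧
      liftSP S gd (Xa.1 io.1) (Yb.1 io.1) io.2

/-! ### Live transcripts -/

/-- `𝒜_{π,W}` : the vectors `a ∈ f⁻¹(1)` such that `(W,a)` is consistent with `π`. -/
def Aset {m ℓ : ℕ} {Λ O : Type} (f : (Fin m → Bool) → Bool)
    (Pr : Protocol ((Fin m → Fin ℓ → Λ) × {a : Fin m → Bool // f a = true})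
                   ((Fin m → Fin ℓ → Λ) × {b : Fin m → Bool // f b = false}) (Fin m × O))
    (π : List Bool) (W : Fin m → Fin ℓ → Λ) : Set (Fin m → Bool) :=
  {a | ∃ h : f a = true, Protocol.followsA Pr π (W, ⟨a, h⟩)}

/-- `ℬ_{π,W}` : the vectors `b ∈ f⁻¹(0)` such that `(W,b)` is consistent with `π`. -/
def Bset {m ℓ : ℕ} {Λ O : Type} (f : (Fin m → Bool) → Bool)
    (Pr : Protocol ((Fin m → Fin ℓ → Λ) × {a : Fin m → Bool // f a = true})
                   ((Fin m → Fin ℓ → Λ) × {b : Fin m → Bool // f b = false}) (Fin m × O))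
    (π : List Bool) (W : Fin m → Fin ℓ → Λ) : Set (Fin m → Bool) :=
  {b | ∃ h : f b = false, Protocol.followsB Pr π (W, ⟨b, h⟩)}

/-- `γ(π)` : the average over uniform `W ∈ Λ^{m×ℓ}` of `mL(𝒜_{π,W} × ℬ_{π,W})`. -/
def gammaM {m ℓ : ℕ} {Λ O : Type} [Fintype Λ] [DecidableEq Λ] (f : (Fin m → Bool) → Bool)
    (Pr : Protocol ((Fin m → Fin ℓ → Λ) × {a : Fin m → Bool // f a = true})
                   ((Fin m → Fin ℓ → Λ) × {b : Fin m → Bool // f b = false}) (Fin m × O))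
    (π : List Bool) : ℝ :=
  (∑ W : Fin m → Fin ℓ → Λ, (mL (Aset f Pr π W) (Bset f Pr π W) : ℝ)) /
    (Fintype.card (Fin m → Fin ℓ → Λ) : ℝ)

/-- A transcript is live (alive) if it is a vertex of the protocol tree and `γ(π) ≥ 4m²`. -/
def LiveT {m ℓ : ℕ} {Λ O : Type} [Fintype Λ] [DecidableEq Λ] (f : (Fin m → Bool) → Bool)
    (Pr : Protocol ((Fin m → Fin ℓ → Λ) × {a : Fin m → Bool // f a = true})
                   ((Fin m → Fin ℓ → Λ) × {b : Fin m → Bool // f b = false}) (Fin m × O))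
    (π : List Bool) : Prop :=
  Protocol.IsTranscript Pr π ∧ 4 * (m : ℝ) ^ 2 ≤ gammaM f Pr π

/-! ### Average degree -/

/-- Projection of a set of strings to the coordinates in `J`. -/
def projSet {N Λ : Type} (W : Set (N → Λ)) (J : Set N) : Set (↥J → Λ) :=
  (fun w (j : ↥J) => w j.val) '' W

/-- Relative average degree: `rAvgDeg_I(W) = (|W| / |W|_{N−I}|) / |Λ|^{|I|}`. -/
def rAvgDeg {N Λ : Type} [Fintype Λ] (W : Set (N → Λ)) (I : Set N) : ℝ :=
  ((W.ncard : ℝ) / ((projSet W Iᶜ).ncard : ℝ)) / ((Fintype.card Λ : ℝ) ^ I.ncard)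

/-- View a set of `m × ℓ` matrices as a set of strings indexed by `Fin m × Fin ℓ`. -/
def matSet {m ℓ : ℕ} {Λ : Type} (WW : Set (Fin m → Fin ℓ → Λ)) : Set (Fin m × Fin ℓ → Λ) :=
  (fun W p => W p.1 p.2) '' WW

/-! ### Hard collections -/

/-- A transcript `π` supports the collection `(𝒲, a^W, b^W)` if for every `W ∈ 𝒲`,
`(W, a^W) ∈ 𝒳_π` and `(W, b^W) ∈ 𝒴_π`. -/
def SupportsCollection {m ℓ : ℕ} {Λ O : Type} (f : (Fin m → Bool) → Bool)
    (Pr : Protocol ((Fin m → Fin ℓ → Λ) × {a : Fin m → Bool // f a = true})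
                   ((Fin m → Fin ℓ → Λ) × {b : Fin m → Bool // f b = false}) (Fin m × O))
    (π : List Bool) (WW : Set (Fin m → Fin ℓ → Λ))
    (aW bW : (Fin m → Fin ℓ → Λ) → (Fin m → Bool)) : Prop :=
  ∀ W ∈ WW, aW W ∈ Aset f Pr π W ∧ bW W ∈ Bset f Pr π W

/-- The collection `(𝒲, a^W, b^W)` is hard: there is a set `R` of revealed rows such that
(i) every set `I` of unrevealed rows has relative average degree at least `4^{-|I|}` in the
restriction of `𝒲` to the unrevealed rows, and (ii) `a^W|_R ≤ b^{W'}|_R` for all `W, W' ∈ 𝒲`. -/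
def HardCollection {m ℓ : ℕ} {Λ : Type} [Fintype Λ] (f : (Fin m → Bool) → Bool)
    (WW : Set (Fin m → Fin ℓ → Λ))
    (aW bW : (Fin m → Fin ℓ → Λ) → (Fin m → Bool)) : Prop :=
  ∃ R : Set (Fin m),
    (∀ I : Set (Fin m), I ⊆ Rᶜ →
      ((1 : ℝ) / 4) ^ I.ncard ≤
        rAvgDeg (projSet (matSet WW) {p : Fin m × Fin ℓ | p.1 ∉ R})
          {q : ↥{p : Fin m × Fin ℓ | p.1 ∉ R} | q.val.1 ∈ I}) ∧
    (∀ W ∈ WW, ∀ W' ∈ WW, ∀ i ∈ R, aW W i ≤ bW W' i)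

/-! ### CNF formulas, Nullstellensatz degree -/

/-- A clause over `ℓ` variables: a set of literals; `(i, true)` is the positive
literal `x_i`, `(i, false)` is the negative literal `¬x_i`. -/
abbrev CnfClause (ℓ : ℕ) := Finset (Fin ℓ × Bool)

/-- An assignment satisfies a clause if some literal is satisfied. -/
def clauseSat {ℓ : ℕ} (z : Fin ℓ → Bool) (C : CnfClause ℓ) : Prop :=
  ∃ lit ∈ C, z lit.1 = lit.2

/-- The search problem `S_φ` : given an assignment, find a violated clause of `φ`. -/
def searchCNF {ℓ : ℕ} (φ : Finset (CnfClause ℓ)) :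
    (Fin ℓ → Bool) → CnfClause ℓ → Prop :=
  fun z C => C ∈ φ ∧ ¬ clauseSat z C

/-- The standard polynomial encoding of a clause. -/
def clausePoly {ℓ : ℕ} (C : CnfClause ℓ) : MvPolynomial (Fin ℓ) (ZMod 2) :=
  ∏ lit ∈ C, (if lit.2 then 1 - MvPolynomial.X lit.1 else MvPolynomial.X lit.1)

/-- The Nullstellensatz degree of a CNF contradiction `φ` over `F₂`. -/
def NSdeg {ℓ : ℕ} (φ : Finset (CnfClause ℓ)) : ℕ :=
  sInf {d : ℕ | ∃ (q : CnfClause ℓ → MvPolynomial (Fin ℓ) (ZMod 2))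
      (r : Fin ℓ → MvPolynomial (Fin ℓ) (ZMod 2)),
      ((∑ C ∈ φ, clausePoly C * q C) +
        ∑ i : Fin ℓ, (MvPolynomial.X i ^ 2 - MvPolynomial.X i) * r i) = 1 ∧
      (∀ C ∈ φ, (clausePoly C * q C).totalDegree ≤ d) ∧
      (∀ i : Fin ℓ, ((MvPolynomial.X i ^ 2 - MvPolynomial.X i) * r i).totalDegree ≤ d)}

/-- The equality gadget. -/
def eqGadget {Λ : Type} [DecidableEq Λ] : Λ → Λ → Bool := fun u v => decide (u = v)

/-! ### Semi-monotone composition -/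

/-- `U_m ◇ mKW_g` : Alice gets `X`, Bob gets `Y`; with `a_i = g(X_i)`, `b_i = g(Y_i)`,
valid outputs are entries `(i,j)` with (`a_i > b_i` and `X i j > Y i j`), or
(`a_i < b_i` and `X i j < Y i j`), or (`a_i = b_i` and `X i j ≠ Y i j`); if `a = b`
the players may output the failure symbol `⊥` (here `none`). -/
def semiU {m : ℕ} {ι : Type} (g : (ι → Bool) → Bool) :
    (Fin m → ι → Bool) → (Fin m → ι → Bool) → Option (Fin m × ι) → Prop :=
  fun X Y o =>
    match o with
    | none => ∀ i, g (X i) = g (Y i)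
    | some e =>
        (g (X e.1) = true ∧ g (Y e.1) = false ∧ X e.1 e.2 = true ∧ Y e.1 e.2 = false) ∨
        (g (X e.1) = false ∧ g (Y e.1) = true ∧ X e.1 e.2 = false ∧ Y e.1 e.2 = true) ∨
        (g (X e.1) = g (Y e.1) ∧ X e.1 e.2 ≠ Y e.1 e.2)

/-! ### Razborov rank measure over F₂ -/

/-- The maximal `F₂`-rank of the restriction of `A` to an `S`-monochromatic rectangle. -/
def monoMaxRank {X Y O : Type} [Fintype X] [Fintype Y]
    (S : X → Y → O → Prop) (A : Matrix X Y (ZMod 2)) : ℕ :=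
  sSup {r : ℕ | ∃ (U : Finset X) (V : Finset Y) (o : O),
    (∀ x ∈ U, ∀ y ∈ V, S x y o) ∧
    r = (A.submatrix (Subtype.val : {x // x ∈ U} → X)
          (Subtype.val : {y // y ∈ V} → Y)).rank}

/-- The Razborov rank measure `μ_{F₂}(S, A)`. -/
def muF2 {X Y O : Type} [Fintype X] [Fintype Y]
    (S : X → Y → O → Prop) (A : Matrix X Y (ZMod 2)) : ℝ :=
  (A.rank : ℝ) / (monoMaxRank S A : ℝ)

/-! ### Kronecker powers, pattern matrices -/

/-- The `m`-fold Kronecker power of a square matrix `B`, with index type `Fin m → ι`. -/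
def kronPow {ι R : Type} [CommMonoid R] (m : ℕ) (B : Matrix ι ι R) :
    Matrix (Fin m → ι) (Fin m → ι) R :=
  Matrix.of fun x y => ∏ i, B (x i) (y i)

/-- The pattern matrix `A_{x,y} = p(eq(x₁,y₁),…,eq(x_ℓ,y_ℓ))` of a multilinear
polynomial `p` with coefficients `phat` over `F₂`. -/
def patternMatrix {Λ : Type} [DecidableEq Λ] (ℓ : ℕ)
    (phat : Finset (Fin ℓ) → ZMod 2) : Matrix (Fin ℓ → Λ) (Fin ℓ → Λ) (ZMod 2) :=
  Matrix.of fun x y =>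
    ∑ T : Finset (Fin ℓ), phat T * ∏ i ∈ T, (if x i = y i then (1 : ZMod 2) else 0)

/-! ### s-t-connectivity -/

/-- The `s`-`t`-connectivity function: the input is the adjacency matrix of a directed
graph on `n` vertices, `s = 0`, `t = n-1`; output is whether `t` is reachable from `s`. -/
def stConn (n : ℕ) : ((Fin n × Fin n) → Bool) → Bool :=
  fun E =>
    if ∀ h : 0 < n,
        Relation.ReflTransGen (fun u v : Fin n => E (u, v) = true)
          ⟨0, h⟩ ⟨n - 1, Nat.sub_lt h Nat.one_pos⟩
      then true else false

/-! ### The matrix M of the semi-monotone composition theorem -/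

/-- The matrix `M` used in the semi-monotone composition theorem, built from a matrix
`A ∈ F₂^{𝒳×𝒴}` (with `𝒳 = range xs`, `𝒴 = range ys` identified with `Fin K` via the
left inverses `ix`, `iy`). -/
def semiM {m n K : ℕ} (g : (Fin n → Bool) → Bool) (xs ys : Fin K → (Fin n → Bool))
    (ix iy : (Fin n → Bool) → Fin K) (A : Matrix (Fin K) (Fin K) (ZMod 2)) :
    Matrix (Fin m → Fin n → Bool) (Fin m → Fin n → Bool) (ZMod 2) :=
  Matrix.of fun X Y =>
    if (fun i => g (X i)) = (fun i => g (Y i)) then 0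
    else ∏ i : Fin m,
      (if g (X i) = true ∧ g (Y i) = false then A (ix (X i)) (iy (Y i))
       else if g (X i) = false ∧ g (Y i) = true then A (ix (Y i)) (iy (X i))
       else if X i = Y i then 1 else 0)

end

/-! The potential `γ` equals `L(mKW_f)` at the root. At an internal vertex the message bit splits
one side of each rectangle `𝒜_{π,W} × ℬ_{π,W}` and leaves the other side unchanged; as a protocol
for the whole rectangle may spend one bit on this split, `mL`, and hence its average `γ`, is
subadditive there. Descending to a child with the larger `γ` thus loses at most a factor of two per
bit, and `4m² · 2^d ≤ L(mKW_f)` holds for `d = ⌊log₂ (L(mKW_f) / 4m²)⌋`. -/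

theorem nonempty_of_apply_ne {ι α β : Type*} {f : (ι → α) → β} {x y : ι → α} (h : f x ≠ f y) :
    Nonempty ι :=
  not_isEmpty_iff.1 fun _ => h (congrArg f (Subsingleton.elim x y))

theorem logb_two_div_four_mul_sq {x y : ℝ} (hx : x ≠ 0) (hy : y ≠ 0) :
    Real.logb 2 (x / (4 * y ^ 2)) = Real.logb 2 x - 2 * Real.logb 2 y - 2 := by
  have hfour : Real.logb 2 4 = 2 := by
    rw [show (4 : ℝ) = 2 ^ 2 by norm_num, Real.logb_pow, Real.logb_self_eq_one one_lt_two]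
    norm_num
  rw [Real.logb_div hx (by positivity), Real.logb_mul (by norm_num) (by positivity),
    Real.logb_pow, hfour]
  push_cast
  ring

theorem exists_natCast_eq_floor_logb_and_pow_le (b : ℕ) {x : ℝ} (hx : 1 ≤ x) :
    ∃ d : ℕ, (d : ℤ) = ⌊Real.logb b x⌋ ∧ (b : ℝ) ^ d ≤ x := by
  refine ⟨Nat.log b ⌊x⌋₊, ?_, ?_⟩
  · rw [Real.floor_logb_natCast (by positivity), Int.log_of_one_le_right b hx]
  · calc (b : ℝ) ^ Nat.log b ⌊x⌋₊ ≤ ⌊x⌋₊ := by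
          exact_mod_cast Nat.pow_log_le_self b (Nat.floor_pos.2 hx).ne'
      _ ≤ x := Nat.floor_le (by positivity)

namespace Protocol

variable {X Y X' Y' O : Type}

/-- The pullback of a protocol along partial maps of the inputs: a player whose input is outside
the domain sends `false`. Total maps restrict a protocol to a subrectangle, and partial inverses of
injections extend it to a larger one, which need not have a total retraction (a side of the
rectangle may be empty). -/
def comap (g : X → Option X') (h : Y → Option Y') : Protocol X' Y' O → Protocol X Y O
  | leaf o => leaf o
  | nodeA u p₀ p₁ => nodeA (fun x => (g x).elim false u) (comap g h p₀) (comap g h p₁)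
  | nodeB u p₀ p₁ => nodeB (fun y => (h y).elim false u) (comap g h p₀) (comap g h p₁)

theorem leaves_comap (g : X → Option X') (h : Y → Option Y') (p : Protocol X' Y' O) :
    (p.comap g h).leaves = p.leaves := by
  induction p <;> simp_all [comap, leaves]

theorem run_comap {g : X → Option X'} {h : Y → Option Y'} (p : Protocol X' Y' O)
    {x : X} {y : Y} {x' : X'} {y' : Y'} (hx : g x = some x') (hy : h y = some y') :
    (p.comap g h).run x y = p.run x' y' := by
  induction p <;> simp_all [comap, run]

theorem subtree_append {p q : Protocol X Y O} {π : List Bool} (hq : p.subtree π = some q)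
    (σ : List Bool) : p.subtree (π ++ σ) = q.subtree σ := by
  induction π generalizing p with
  | nil => simp_all [subtree]
  | cons b π ih => cases p <;> cases b <;> simp_all [subtree]

theorem followsA_append {p q : Protocol X Y O} {π : List Bool} (hq : p.subtree π = some q)
    (σ : List Bool) (x : X) : p.followsA (π ++ σ) x ↔ p.followsA π x ∧ q.followsA σ x := by
  induction π generalizing p with
  | nil => simp_all [subtree, followsA]
  | cons b π ih => cases p <;> cases b <;> simp_all [subtree, followsA, and_assoc]

theorem followsB_append {p q : Protocol X Y O} {π : List Bool} (hq : p.subtree π = some q)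
    (σ : List Bool) (y : Y) : p.followsB (π ++ σ) y ↔ p.followsB π y ∧ q.followsB σ y := by
  induction π generalizing p with
  | nil => simp_all [subtree, followsB]
  | cons b π ih => cases p <;> cases b <;> simp_all [subtree, followsB, and_assoc]

theorem IsTranscript.subtree_eq_node {p : Protocol X Y O} {π : List Bool}
    (hπ : p.IsTranscript π) (hleaf : ¬ p.IsFullTranscript π) :
    (∃ u p₀ p₁, p.subtree π = some (nodeA u p₀ p₁)) ∨
      ∃ u p₀ p₁, p.subtree π = some (nodeB u p₀ p₁) := by
  obtain ⟨q, hq⟩ := Option.isSome_iff_exists.1 hπ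
  cases q with
  | leaf o => exact absurd ⟨o, hq⟩ hleaf
  | nodeA u p₀ p₁ => exact .inl ⟨u, p₀, p₁, hq⟩
  | nodeB u p₀ p₁ => exact .inr ⟨u, p₀, p₁, hq⟩

theorem IsTranscript.append_singleton {p : Protocol X Y O} {π : List Bool}
    (hπ : p.IsTranscript π) (hleaf : ¬ p.IsFullTranscript π) (b : Bool) :
    p.IsTranscript (π ++ [b]) := by
  rw [IsTranscript]
  rcases hπ.subtree_eq_node hleaf with ⟨u, p₀, p₁, hq⟩ | ⟨u, p₀, p₁, hq⟩ <;>
    cases b <;> simp [subtree_append hq, subtree]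

theorem exists_le_of_subadditive {M : Type*} [AddCommMonoid M] [LinearOrder M]
    [IsOrderedCancelAddMonoid M] (p : Protocol X Y O) {φ : List Bool → M}
    (hφ : ∀ π, p.IsTranscript π → ¬ p.IsFullTranscript π →
      φ π ≤ φ (π ++ [false]) + φ (π ++ [true]))
    (d : ℕ) {c : M} (hc : 0 ≤ c) (hroot : 2 ^ d • c ≤ φ []) :
    ∃ π, p.IsTranscript π ∧ c ≤ φ π ∧ (π.length = d ∨ p.IsFullTranscript π) := by
  induction d generalizing c with
  | zero => exact ⟨[], by simp [IsTranscript, subtree], by simpa using hroot, .inl rfl⟩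
  | succ d ih =>
    have hdouble : 2 ^ d • (c + c) ≤ φ [] := by rwa [← two_nsmul, ← mul_nsmul', ← pow_succ]
    obtain ⟨π, hπ, hcπ, hlen⟩ := ih (add_nonneg hc hc) hdouble
    by_cases hleaf : p.IsFullTranscript π
    · exact ⟨π, hπ, (le_add_of_nonneg_left hc).trans hcπ, .inr hleaf⟩
    have hchild : ∃ b, c ≤ φ (π ++ [b]) :=
      (le_or_le_of_add_le_add (hcπ.trans (hφ π hπ hleaf))).elim (⟨_, ·⟩) (⟨_, ·⟩)
    obtain ⟨b, hb⟩ := hchild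
    exact ⟨π ++ [b], hπ.append_singleton hleaf b, hb, .inl (by simp [hlen.resolve_right hleaf])⟩

end Protocol

section Lsize

variable {X Y X' Y' O : Type} {S : X → Y → O → Prop}

/-- Some protocol solves `S`. Otherwise `Lsize S` is the junk value `0`. -/
def Solvable (S : X → Y → O → Prop) : Prop :=
  ∃ p : Protocol X Y O, Solves p S

theorem Solvable.comp (hS : Solvable S) (i : X' → X) (j : Y' → Y) :
    Solvable fun x y => S (i x) (j y) := by
  obtain ⟨p, hp⟩ := hS
  refine ⟨p.comap (some ∘ i) (some ∘ j), fun x y => ?_⟩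
  have hrun : (p.comap (some ∘ i) (some ∘ j)).run x y = p.run (i x) (j y) := p.run_comap rfl rfl
  simpa only [hrun] using hp (i x) (j y)

theorem Lsize_le_leaves {p : Protocol X Y O} (hp : Solves p S) : Lsize S ≤ p.leaves :=
  Nat.sInf_le ⟨p, hp, rfl⟩

theorem Solvable.exists_leaves_eq_Lsize (hS : Solvable S) :
    ∃ p : Protocol X Y O, Solves p S ∧ p.leaves = Lsize S := by
  obtain ⟨p, hp⟩ := hS
  exact Nat.sInf_mem (s := {k | ∃ p : Protocol X Y O, Solves p S ∧ p.leaves = k}) ⟨_, p, hp, rfl⟩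

theorem solvable_of_Lsize_pos (h : 0 < Lsize S) : Solvable S := by
  obtain ⟨_, p, hp, _⟩ := Nat.nonempty_of_pos_sInf h
  exact ⟨p, hp⟩

theorem Solvable.exists_extension (hS : Solvable S) {i : X' → X} {j : Y' → Y}
    (hi : i.Injective) (hj : j.Injective) :
    ∃ p : Protocol X Y O, p.leaves = Lsize (fun x y => S (i x) (j y)) ∧
      ∀ x y, S (i x) (j y) (p.run (i x) (j y)) := by
  obtain ⟨p, hp, hleaves⟩ := (hS.comp i j).exists_leaves_eq_Lsize
  refine ⟨p.comap (Function.partialInv i) (Function.partialInv j), ?_, fun x y => ?_⟩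
  · rw [p.leaves_comap, hleaves]
  · rw [p.run_comap (Function.partialInv_left hi x) (Function.partialInv_left hj y)]
    exact hp x y

theorem Solvable.Lsize_le_add_of_cover_left {X₀ X₁ : Type} (hS : Solvable S)
    {i₀ : X₀ → X} {i₁ : X₁ → X} (h₀ : i₀.Injective) (h₁ : i₁.Injective)
    (hcover : ∀ x, x ∈ Set.range i₀ ∨ x ∈ Set.range i₁) :
    Lsize S ≤ Lsize (fun x y => S (i₀ x) y) + Lsize (fun x y => S (i₁ x) y) := by
  obtain ⟨p₀, hleaves₀, hp₀⟩ := hS.exists_extension h₀ Function.injective_id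
  obtain ⟨p₁, hleaves₁, hp₁⟩ := hS.exists_extension h₁ Function.injective_id
  have hsolves : Solves (.nodeA (fun x => decide (x ∈ Set.range i₁)) p₀ p₁) S := by
    intro x y
    by_cases hx : x ∈ Set.range i₁
    · obtain ⟨x₁, rfl⟩ := hx
      simpa [Protocol.run] using hp₁ x₁ y
    · obtain ⟨x₀, rfl⟩ := (hcover x).resolve_right hx
      simpa only [Protocol.run, hx, decide_false, Bool.false_eq_true, if_false, id_eq]
        using hp₀ x₀ y
  exact (Lsize_le_leaves hsolves).trans_eq (congrArg₂ (· + ·) hleaves₀ hleaves₁)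

theorem Solvable.Lsize_le_add_of_cover_right {Y₀ Y₁ : Type} (hS : Solvable S)
    {j₀ : Y₀ → Y} {j₁ : Y₁ → Y} (h₀ : j₀.Injective) (h₁ : j₁.Injective)
    (hcover : ∀ y, y ∈ Set.range j₀ ∨ y ∈ Set.range j₁) :
    Lsize S ≤ Lsize (fun x y => S x (j₀ y)) + Lsize (fun x y => S x (j₁ y)) := by
  obtain ⟨p₀, hleaves₀, hp₀⟩ := hS.exists_extension Function.injective_id h₀
  obtain ⟨p₁, hleaves₁, hp₁⟩ := hS.exists_extension Function.injective_id h₁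
  have hsolves : Solves (.nodeB (fun y => decide (y ∈ Set.range j₁)) p₀ p₁) S := by
    intro x y
    by_cases hy : y ∈ Set.range j₁
    · obtain ⟨y₁, rfl⟩ := hy
      simpa [Protocol.run] using hp₁ x y₁
    · obtain ⟨y₀, rfl⟩ := (hcover y).resolve_right hy
      simpa only [Protocol.run, hy, decide_false, Bool.false_eq_true, if_false, id_eq]
        using hp₀ x y₀
  exact (Lsize_le_leaves hsolves).trans_eq (congrArg₂ (· + ·) hleaves₀ hleaves₁)

end Lsize

section mL

variable {ι : Type} {A A₀ A₁ B B₀ B₁ : Set (ι → Bool)}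

theorem Solvable.mKWrect {f : (ι → Bool) → Bool} (hf : Solvable (mKW f))
    (hA : ∀ a ∈ A, f a = true) (hB : ∀ b ∈ B, f b = false) : Solvable (mKWrect A B) :=
  hf.comp (fun a : A => ⟨a, hA a a.2⟩) (fun b : B => ⟨b, hB b b.2⟩)

theorem mL_union_left_le (h : Solvable (mKWrect (A₀ ∪ A₁) B)) :
    mL (A₀ ∪ A₁) B ≤ mL A₀ B + mL A₁ B :=
  h.Lsize_le_add_of_cover_left (Set.inclusion_injective Set.subset_union_left)
    (Set.inclusion_injective Set.subset_union_right) <| by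
      simp only [Set.range_inclusion, Set.mem_ofPred_eq]
      exact fun a => a.2

theorem mL_union_right_le (h : Solvable (mKWrect A (B₀ ∪ B₁))) :
    mL A (B₀ ∪ B₁) ≤ mL A B₀ + mL A B₁ :=
  h.Lsize_le_add_of_cover_right (Set.inclusion_injective Set.subset_union_left)
    (Set.inclusion_injective Set.subset_union_right) <| by
      simp only [Set.range_inclusion, Set.mem_ofPred_eq]
      exact fun b => b.2

end mL

section Transcript

variable {m ℓ : ℕ} {Λ O : Type} {f : (Fin m → Bool) → Bool}
  {Pr : Protocol ((Fin m → Fin ℓ → Λ) × {a : Fin m → Bool // f a = true})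
    ((Fin m → Fin ℓ → Λ) × {b : Fin m → Bool // f b = false}) (Fin m × O)}
  {π : List Bool}

theorem Aset_append_of_nodeA {u p₀ p₁} (hπ : Pr.subtree π = some (.nodeA u p₀ p₁))
    (W : Fin m → Fin ℓ → Λ) :
    Aset f Pr (π ++ [false]) W ∪ Aset f Pr (π ++ [true]) W = Aset f Pr π W := by
  simp [Aset, Protocol.followsA_append hπ, Protocol.followsA, ← Set.ofPred_or, ← exists_or,
    ← and_or_left]

theorem Aset_append_of_nodeB {u p₀ p₁} (hπ : Pr.subtree π = some (.nodeB u p₀ p₁))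
    (W : Fin m → Fin ℓ → Λ) (b : Bool) : Aset f Pr (π ++ [b]) W = Aset f Pr π W := by
  simp [Aset, Protocol.followsA_append hπ, Protocol.followsA]

theorem Bset_append_of_nodeA {u p₀ p₁} (hπ : Pr.subtree π = some (.nodeA u p₀ p₁))
    (W : Fin m → Fin ℓ → Λ) (b : Bool) : Bset f Pr (π ++ [b]) W = Bset f Pr π W := by
  simp [Bset, Protocol.followsB_append hπ, Protocol.followsB]

theorem Bset_append_of_nodeB {u p₀ p₁} (hπ : Pr.subtree π = some (.nodeB u p₀ p₁))
    (W : Fin m → Fin ℓ → Λ) :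
    Bset f Pr (π ++ [false]) W ∪ Bset f Pr (π ++ [true]) W = Bset f Pr π W := by
  simp [Bset, Protocol.followsB_append hπ, Protocol.followsB, ← Set.ofPred_or, ← exists_or,
    ← and_or_left]

theorem mL_le_mL_append_add_mL_append (hf : Solvable (mKW f)) (hπ : Pr.IsTranscript π)
    (hleaf : ¬ Pr.IsFullTranscript π) (W : Fin m → Fin ℓ → Λ) :
    mL (Aset f Pr π W) (Bset f Pr π W) ≤
      mL (Aset f Pr (π ++ [false]) W) (Bset f Pr (π ++ [false]) W) +
        mL (Aset f Pr (π ++ [true]) W) (Bset f Pr (π ++ [true]) W) := by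
  have hsolvable : Solvable (mKWrect (Aset f Pr π W) (Bset f Pr π W)) :=
    hf.mKWrect (fun _ ha => ha.1) (fun _ hb => hb.1)
  rcases hπ.subtree_eq_node hleaf with ⟨u, p₀, p₁, hnode⟩ | ⟨u, p₀, p₁, hnode⟩
  · rw [← Aset_append_of_nodeA hnode] at hsolvable ⊢
    simpa only [Bset_append_of_nodeA hnode] using mL_union_left_le hsolvable
  · rw [← Bset_append_of_nodeB hnode] at hsolvable ⊢
    simpa only [Aset_append_of_nodeB hnode] using mL_union_right_le hsolvable

theorem mL_Aset_nil_Bset_nil (W : Fin m → Fin ℓ → Λ) :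
    mL (Aset f Pr [] W) (Bset f Pr [] W) = Lsize (mKW f) := by
  have hA : Aset f Pr [] W = {a | f a = true} := by simp [Aset, Protocol.followsA]
  have hB : Bset f Pr [] W = {b | f b = false} := by simp [Bset, Protocol.followsB]
  rw [hA, hB]
  rfl

variable [Fintype Λ] [DecidableEq Λ]

theorem gammaM_nil [Nonempty Λ] : gammaM f Pr [] = Lsize (mKW f) := by
  simp only [gammaM, mL_Aset_nil_Bset_nil, Finset.sum_const, Finset.card_univ, nsmul_eq_mul]
  exact mul_div_cancel_left₀ _ (Nat.cast_ne_zero.2 Fintype.card_ne_zero)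

theorem gammaM_le_gammaM_append_add_gammaM_append (hf : Solvable (mKW f))
    (hπ : Pr.IsTranscript π) (hleaf : ¬ Pr.IsFullTranscript π) :
    gammaM f Pr π ≤ gammaM f Pr (π ++ [false]) + gammaM f Pr (π ++ [true]) := by
  unfold gammaM
  rw [← add_div, ← Finset.sum_add_distrib]
  gcongr
  exact_mod_cast mL_le_mL_append_add_mL_append hf hπ hleaf _

end Transcript

theorem live_transcript_exists_general {m ℓ : ℕ} {Λ O : Type} [Fintype Λ] [DecidableEq Λ]
    [Nonempty Λ] {f : (Fin m → Bool) → Bool} (hf1 : ∃ x, f x = true) (hf0 : ∃ x, f x = false)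
    (hL : 4 * m ^ 2 ≤ Lsize (mKW f))
    (Pr : Protocol ((Fin m → Fin ℓ → Λ) × {a : Fin m → Bool // f a = true})
      ((Fin m → Fin ℓ → Λ) × {b : Fin m → Bool // f b = false}) (Fin m × O)) :
    ∃ π : List Bool, LiveT f Pr π ∧
      (((π.length : ℤ) =
          ⌊Real.logb 2 ((Lsize (mKW f) : ℝ)) - 2 * Real.logb 2 (m : ℝ) - 2⌋) ∨
        Protocol.IsFullTranscript Pr π) := by
  obtain ⟨x, hx⟩ := hf1
  obtain ⟨y, hy⟩ := hf0
  have hne : f x ≠ f y := by simp [hx, hy]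
  have hm : 0 < m := Fin.pos_iff_nonempty.2 (nonempty_of_apply_ne hne)
  have hLpos : 0 < Lsize (mKW f) := lt_of_lt_of_le (by positivity) hL
  have hratio : (1 : ℝ) ≤ Lsize (mKW f) / (4 * m ^ 2) := by
    rw [one_le_div (by positivity)]
    exact_mod_cast hL
  obtain ⟨d, hd, hpow⟩ := exists_natCast_eq_floor_logb_and_pow_le 2 hratio
  have hroot : 2 ^ d • (4 * (m : ℝ) ^ 2) ≤ gammaM f Pr [] := by
    rw [le_div_iff₀ (by positivity)] at hpow
    simpa [gammaM_nil, nsmul_eq_mul] using hpow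
  obtain ⟨π, hπ, hγ, hlen⟩ := Pr.exists_le_of_subadditive
    (fun _ => gammaM_le_gammaM_append_add_gammaM_append (solvable_of_Lsize_pos hLpos))
    d (by positivity) hroot
  refine ⟨π, ⟨hπ, hγ⟩, hlen.imp_left fun hlen => ?_⟩
  rw [hlen, hd, Nat.cast_ofNat, logb_two_div_four_mul_sq (by positivity) (by positivity)]

/-- If `L(mKW_f) ≥ 4m²`, then every protocol solving
`mKW_f ⊛ (S ◇ gd)` has either a live transcript of length exactly
`⌊log₂ L(mKW_f) − 2·log₂ m − 2⌋`, or a live transcript that is a leaf. -/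
theorem live_transcript_exists (m ℓ t : ℕ) (O : Type)
    (f : (Fin m → Bool) → Bool) (S : (Fin ℓ → Bool) → O → Prop)
    (gd : (Fin t → Bool) → (Fin t → Bool) → Bool)
    (hf : Monotone f) (hf1 : ∃ x, f x = true) (hf0 : ∃ x, f x = false)
    (hL : 4 * m ^ 2 ≤ Lsize (mKW f))
    (Pr : Protocol
        ((Fin m → Fin ℓ → (Fin t → Bool)) × {a : Fin m → Bool // f a = true})
        ((Fin m → Fin ℓ → (Fin t → Bool)) × {b : Fin m → Bool // f b = false})
        (Fin m × O))
    (hPr : Solves Pr (starLift f S gd)) :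
    ∃ π : List Bool, LiveT f Pr π ∧
      (((π.length : ℤ) =
          ⌊Real.logb 2 ((Lsize (mKW f) : ℝ)) - 2 * Real.logb 2 (m : ℝ) - 2⌋) ∨
        Protocol.IsFullTranscript Pr π) :=
  live_transcript_exists_general hf1 hf0 hL Pr
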